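/- arXiv:1112.6361 — 9 statements merged into one kernel-verified Lean document; each statement's English description precedes it below -/
import Mathlib

section
/- Let X and X' be two legal allocation matrices in the divisible multi-slot setting with m = Σ_{i∈I} κ_i (so both have column sums 1 and row sums κ_i), and let h and l be defined with respect to X. Let T ⊆ I be a set of bidders that is swap-closed: whenever a ∈ T and b ∈ I satisfy h(b) > l(a), then b ∈ T. Then the total weighted capacity of T cannot increase when passing from X to X': Σ_{i∈T} Σ_{j∈J} α_j (x'_{i,j} − x_{i,j}) ≤ 0. -/
/-!
Divisible multi-slot setting.  STATEMENT 3: for two legal allocation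
matrices `X, X'` (column sums `1`, row sums `κ_i`) and a swap-closed set
`T` of bidders (closed w.r.t. `h, l` defined from `X`), the total
weighted capacity of `T` cannot increase when passing from `X` to `X'`.
-/

open Finset

/-- A legal allocation matrix: nonnegative, row sums `κ_i`, column sums `1`. -/
def LegalMatrix (n m : ℕ) (κ : Fin n → ℕ) (X : Fin n → ℕ → ℝ) : Prop :=
  (∀ i j, j < m → 0 ≤ X i j) ∧
  (∀ i, ∑ j ∈ Finset.range m, X i j = (κ i : ℝ)) ∧
  (∀ j, j < m → ∑ i, X i j = 1)

/-- `l(i)`: the (index of the) lowest-quality slot assigned to bidder `i`. -/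
noncomputable def lSlot (m : ℕ) {n : ℕ} (X : Fin n → ℕ → ℝ) (i : Fin n) : ℕ :=
  sInf {j | j < m ∧ 0 < X i j}

/-- `h'(i)`: the (index of the) highest-quality slot assigned to bidder `i`. -/
noncomputable def hSlot' (m : ℕ) {n : ℕ} (X : Fin n → ℕ → ℝ) (i : Fin n) : ℕ :=
  sSup {j | j < m ∧ 0 < X i j}

/-- `h(i) = min { j : α_j = α_{h'(i)} }`. -/
noncomputable def hSlot (m : ℕ) (α : ℕ → ℝ) {n : ℕ}
    (X : Fin n → ℕ → ℝ) (i : Fin n) : ℕ :=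
  sInf {j | j < m ∧ α j = α (hSlot' m X i)}

/-- if `T` is swap-closed (whenever `a ∈ T` and
`h(b) > l(a)` then `b ∈ T`), then
`Σ_{i∈T} Σ_j α_j (x'_{i,j} − x_{i,j}) ≤ 0`. -/
theorem stmt3 {n m : ℕ} (κ : Fin n → ℕ) (hκ : ∀ i, 1 ≤ κ i)
    (hm : m = ∑ i, κ i)
    (α : ℕ → ℝ) (hα0 : ∀ j, 0 ≤ α j) (hαmono : Monotone α)
    (X X' : Fin n → ℕ → ℝ)
    (hX : LegalMatrix n m κ X) (hX' : LegalMatrix n m κ X')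
    (T : Finset (Fin n))
    (hT : ∀ a ∈ T, ∀ b : Fin n, lSlot m X a < hSlot m α X b → b ∈ T) :
    ∑ i ∈ T, ∑ j ∈ Finset.range m, α j * (X' i j - X i j) ≤ 0 := by
  classical
  obtain ⟨hX0, hXr, hXc⟩ := hX
  obtain ⟨hX0', hXr', hXc'⟩ := hX'
  rcases T.eq_empty_or_nonempty with rfl | hne
  · simp
  obtain ⟨a, haT, hmin⟩ := T.exists_min_image (fun i => lSlot m X i) hne
  -- members of `T` only use slots of quality at least that of `l(a)`
  have hin : ∀ i ∈ T, ∀ j, j < m → 0 < X i j → α (lSlot m X a) ≤ α j := by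
    intro i hi j hj hx
    exact hαmono ((hmin i hi).trans (Nat.sInf_le ⟨hj, hx⟩))
  -- bidders outside `T` only use slots of quality at most that of `l(a)`
  have hout : ∀ b, b ∉ T → ∀ j, j < m → 0 < X b j → α j ≤ α (lSlot m X a) := by
    intro b hb j hj hx
    have hle : hSlot m α X b ≤ lSlot m X a := by
      by_contra hlt
      exact hb (hT a haT b (not_le.mp hlt))
    have hbdd : BddAbove {j | j < m ∧ 0 < X b j} := ⟨m, fun k hk => hk.1.le⟩
    have hjle : j ≤ hSlot' m X b := le_csSup hbdd ⟨hj, hx⟩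
    have hmem : hSlot' m X b ∈ {j | j < m ∧ 0 < X b j} :=
      Nat.sSup_mem ⟨j, hj, hx⟩ hbdd
    have hmem2 : hSlot m α X b ∈ {j | j < m ∧ α j = α (hSlot' m X b)} :=
      Nat.sInf_mem ⟨hSlot' m X b, hmem.1, rfl⟩
    calc α j ≤ α (hSlot' m X b) := hαmono hjle
      _ = α (hSlot m α X b) := hmem2.2.symm
      _ ≤ α (lSlot m X a) := hαmono hle
  set c := α (lSlot m X a) with hc
  have hrow : ∀ i ∈ T, ∑ j ∈ Finset.range m, α j * (X' i j - X i j)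
      = ∑ j ∈ Finset.range m, (α j - c) * (X' i j - X i j) := by
    intro i _
    have h0 : ∑ j ∈ Finset.range m, (X' i j - X i j) = 0 := by
      rw [Finset.sum_sub_distrib, hXr, hXr', sub_self]
    have h1 : ∑ j ∈ Finset.range m, c * (X' i j - X i j) = 0 := by
      rw [← Finset.mul_sum, h0, mul_zero]
    have h2 : ∀ j, (α j - c) * (X' i j - X i j)
        = α j * (X' i j - X i j) - c * (X' i j - X i j) := fun j => by ring
    rw [Finset.sum_congr rfl fun j _ => h2 j, Finset.sum_sub_distrib, h1, sub_zero]
  rw [Finset.sum_congr rfl hrow, Finset.sum_comm]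
  refine Finset.sum_nonpos fun j hj => ?_
  have hj : j < m := Finset.mem_range.mp hj
  rw [← Finset.mul_sum, Finset.sum_sub_distrib]
  rcases lt_trichotomy (α j) c with hlt | heq | hgt
  · have hS : ∑ i ∈ T, X i j = 0 := by
      refine Finset.sum_eq_zero fun i hi => ?_
      by_contra hne0
      exact absurd (hin i hi j hj (lt_of_le_of_ne (hX0 i j hj) (Ne.symm hne0))) (not_le.mpr hlt)
    have hS' : 0 ≤ ∑ i ∈ T, X' i j := Finset.sum_nonneg fun i _ => hX0' i j hj
    rw [hS, sub_zero]
    exact mul_nonpos_of_nonpos_of_nonneg (by linarith) hS'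
  · rw [heq, sub_self, zero_mul]
  · have hS : ∑ i ∈ T, X i j = 1 := by
      rw [← hXc j hj]
      refine Finset.sum_subset (Finset.subset_univ T) fun i _ hi => ?_
      by_contra hne0
      exact absurd (hout i hi j hj (lt_of_le_of_ne (hX0 i j hj) (Ne.symm hne0))) (not_le.mpr hgt)
    have hS' : ∑ i ∈ T, X' i j ≤ 1 := by
      rw [← hXc' j hj]
      exact Finset.sum_le_sum_of_subset_of_nonneg (Finset.subset_univ T)
        fun i _ _ => hX0' i j hj
    rw [hS]
    exact mul_nonpos_of_nonneg_of_nonpos (by linarith) (by linarith)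
end

section
/- For every probability distribution with finite support over legal indivisible allocations there exists a legal divisible allocation (X,p) such that the utility of every bidder and the utility of the auctioneer under (X,p) equal the corresponding expected utilities under the probability distribution. -/
/-!
STATEMENT 6: for every finitely supported probability distribution over
legal indivisible allocations there exists a legal divisible allocation
whose bidder utilities and auctioneer utility equal the corresponding
expected utilities under the distribution.

Bidders are `Fin n`, slots are `Fin m` with qualities `α`, rounds form a
finite nonempty type `R`.  An indivisible allocation assigns every slot
of every round to a bidder via `N : Fin m → R → Fin n`.
-/

open Finset

/-- Legality of an indivisible allocation `(N, p)`. -/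
def LegalIndiv {n m : ℕ} {R : Type*} [Fintype R]
    (κ : Fin n → ℕ) (b : Fin n → ℝ)
    (N : Fin m → R → Fin n) (p : Fin n → ℝ) : Prop :=
  (∀ (i : Fin n) (r : R), ((univ.filter fun j : Fin m => N j r = i).card) ≤ κ i) ∧
  (∀ i, p i ≤ b i)

/-- Weighted capacity of bidder `i` under the indivisible allocation `N`:
`c_i = Σ_{j} (α_j / |R|) · |{r : N(j,r) = i}|`. -/
noncomputable def capIndiv {n m : ℕ} {R : Type*} [Fintype R] (α : Fin m → ℝ)
    (N : Fin m → R → Fin n) (i : Fin n) : ℝ :=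
  ∑ j, (α j / (Fintype.card R : ℝ)) *
    ((univ.filter fun r : R => N j r = i).card : ℝ)

/-- Legality of a divisible allocation `(X, p)`. -/
def LegalDiv {n m : ℕ} (κ : Fin n → ℕ) (b : Fin n → ℝ)
    (X : Fin n → Fin m → ℝ) (p : Fin n → ℝ) : Prop :=
  (∀ i j, 0 ≤ X i j) ∧
  (∀ i, ∑ j, X i j ≤ (κ i : ℝ)) ∧
  (∀ j, ∑ i, X i j = 1) ∧
  (∀ i, p i ≤ b i)

theorem stmt6 {n m : ℕ} {R : Type*} [Fintype R] [Nonempty R]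
    (κ : Fin n → ℕ) (hκ : ∀ i, 1 ≤ κ i)
    (α : Fin m → ℝ) (hα : ∀ j, 0 ≤ α j)
    (v b : Fin n → ℝ) (hv : ∀ i, 0 ≤ v i)
    -- a probability distribution with finite support, indexed by `K`
    {K : Type*} [Fintype K] (μ : K → ℝ)
    (hμ0 : ∀ k, 0 ≤ μ k) (hμ1 : ∑ k, μ k = 1)
    (N : K → Fin m → R → Fin n) (P : K → Fin n → ℝ)
    (hleg : ∀ k, LegalIndiv κ b (N k) (P k)) :
    ∃ (X : Fin n → Fin m → ℝ) (p : Fin n → ℝ),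
      LegalDiv κ b X p ∧
      (∀ i, (∑ j, α j * X i j) * v i - p i =
        ∑ k, μ k * (capIndiv α (N k) i * v i - P k i)) ∧
      (∑ i, p i = ∑ k, μ k * ∑ i, P k i) := by
  have hR : (0 : ℝ) < (Fintype.card R : ℝ) := by exact_mod_cast Fintype.card_pos
  have hcard : ∀ k i j, ((univ.filter fun r : R => N k j r = i).card : ℝ)
      = ∑ r, if N k j r = i then (1 : ℝ) else 0 := by
    intro k i j
    simp
  refine ⟨fun i j => ∑ k, μ k * (((univ.filter fun r : R => N k j r = i).card : ℝ)
      / (Fintype.card R : ℝ)), fun i => ∑ k, μ k * P k i, ⟨?_, ?_, ?_, ?_⟩, ?_, ?_⟩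
  · intro i j
    exact Finset.sum_nonneg fun k _ => mul_nonneg (hμ0 k) (by positivity)
  · intro i
    rw [Finset.sum_comm]
    have h : ∀ k, ∑ j, μ k * (((univ.filter fun r : R => N k j r = i).card : ℝ)
        / (Fintype.card R : ℝ)) ≤ μ k * (κ i : ℝ) := by
      intro k
      rw [← Finset.mul_sum, ← Finset.sum_div]
      refine mul_le_mul_of_nonneg_left ?_ (hμ0 k)
      rw [div_le_iff₀ hR]
      simp only [hcard]
      rw [Finset.sum_comm]
      calc ∑ r, ∑ j, (if N k j r = i then (1 : ℝ) else 0)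
          ≤ ∑ _r : R, (κ i : ℝ) := by
            refine Finset.sum_le_sum fun r _ => ?_
            have := (hleg k).1 i r
            rw [Finset.sum_boole]
            exact_mod_cast this
        _ = (κ i : ℝ) * (Fintype.card R : ℝ) := by
            simp [mul_comm]
    calc _ ≤ ∑ k, μ k * (κ i : ℝ) := Finset.sum_le_sum fun k _ => h k
      _ = (κ i : ℝ) := by rw [← Finset.sum_mul, hμ1, one_mul]
  · intro j
    rw [Finset.sum_comm, ← hμ1]
    refine Finset.sum_congr rfl fun k _ => ?_
    rw [← Finset.mul_sum, ← Finset.sum_div]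
    simp only [hcard]
    rw [Finset.sum_comm]
    simp [hR.ne']
  · intro i
    calc ∑ k, μ k * P k i ≤ ∑ k, μ k * b i :=
          Finset.sum_le_sum fun k _ => mul_le_mul_of_nonneg_left ((hleg k).2 i) (hμ0 k)
      _ = b i := by rw [← Finset.sum_mul, hμ1, one_mul]
  · intro i
    simp only [mul_sub, Finset.sum_sub_distrib]
    congr 1
    simp only [← mul_assoc]
    rw [← Finset.sum_mul]
    congr 1
    simp only [capIndiv, Finset.mul_sum]
    rw [Finset.sum_comm]
    refine Finset.sum_congr rfl fun k _ => Finset.sum_congr rfl fun j _ => ?_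
    ring
  · simp only [Finset.mul_sum]
    rw [Finset.sum_comm]
end

section
/- Let J, C, I be finite nonempty sets and let M : J × C → I be a matrix (rows indexed by J, columns indexed by C, entries valued in I) such that every value i ∈ I appears in at most |C| entries of M. Then there exists a matrix M' : J × C → I such that (1) every value appears in each row of M' exactly as often as in the corresponding row of M, i.e., |{c ∈ C : M'(j,c) = i}| = |{c ∈ C : M(j,c) = i}| for all j ∈ J and i ∈ I, and (2) every value appears in at most one entry of each column of M', i.e., for every c ∈ C the map j ↦ M'(j,c) is injective. -/
/-!
STATEMENT 8: given a matrix `M : J → C → I` (rows `J`, columns `C`,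
entries in `I`) in which every value `i ∈ I` appears in at most `|C|`
entries, there is a matrix `M'` with the same row multisets as `M` in
which every value appears at most once in each column.
-/

open Finset

lemma regular_decomp {α β : Type*} [Fintype α] [Fintype β] [DecidableEq α] [DecidableEq β]
    (hcard : Fintype.card α = Fintype.card β) (n : ℕ) : ∀ (B : α → β → ℕ),
    (∀ a, ∑ b, B a b = n) → (∀ b, ∑ a, B a b = n) →
    ∃ f : Fin n → α → β, (∀ k, Function.Injective (f k)) ∧
      ∀ a b, (univ.filter fun k => f k a = b).card = B a b := by
  induction n with
  | zero =>
    intro B hr _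
    refine ⟨fun k => k.elim0, fun k => k.elim0, fun a b => ?_⟩
    have := hr a
    rw [Finset.sum_eq_zero_iff] at this
    simp [this b (mem_univ b)]
  | succ n ih =>
    intro B hr hc
    have hall : ∃ g : α → β, Function.Injective g ∧
        ∀ a, g a ∈ (univ.filter fun b => 0 < B a b) := by
      rw [← Finset.all_card_le_biUnion_card_iff_exists_injective]
      intro S
      set N := S.biUnion fun a => (univ.filter fun b => 0 < B a b) with hN
      have h1 : S.card * (n + 1) ≤ N.card * (n + 1) := by
        calc S.card * (n + 1) = ∑ a ∈ S, ∑ b, B a b := by simp [hr]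
          _ = ∑ a ∈ S, ∑ b ∈ N, B a b := by
            refine Finset.sum_congr rfl fun a ha => ?_
            symm
            refine Finset.sum_subset (subset_univ _) fun b _ hb => ?_
            by_contra h0
            exact hb (mem_biUnion.2 ⟨a, ha, by simp; omega⟩)
          _ = ∑ b ∈ N, ∑ a ∈ S, B a b := Finset.sum_comm
          _ ≤ ∑ b ∈ N, ∑ a, B a b :=
            Finset.sum_le_sum fun b _ => Finset.sum_le_sum_of_subset (subset_univ S)
          _ = N.card * (n + 1) := by simp [hc]
      exact Nat.le_of_mul_le_mul_right h1 (Nat.succ_pos n)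
    obtain ⟨g, hg, hpos⟩ := hall
    have hbij : Function.Bijective g := (Fintype.bijective_iff_injective_and_card g).2 ⟨hg, hcard⟩
    have hpos' : ∀ a, 0 < B a (g a) := fun a => by simpa using hpos a
    have hsplit : ∀ a b, (B a b - if g a = b then 1 else 0) + (if g a = b then 1 else 0) = B a b := by
      intro a b
      split_ifs with h
      · have := hpos' a
        rw [h] at this
        omega
      · rfl
    obtain ⟨f, hf, hfB⟩ := ih (fun a b => B a b - if g a = b then 1 else 0) (by
        intro a
        have h := hr a
        rw [← Finset.sum_congr rfl fun b _ => hsplit a b] at h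
        rw [Finset.sum_add_distrib] at h
        simp at h
        simpa using h) (by
        intro b
        have h := hc b
        rw [← Finset.sum_congr rfl fun a _ => hsplit a b] at h
        rw [Finset.sum_add_distrib] at h
        obtain ⟨a0, ha0⟩ := hbij.2 b
        have h2 : ∑ a, (if g a = b then 1 else 0) = 1 := by
          rw [Finset.sum_eq_single a0]
          · simp [ha0]
          · intro a _ hne
            rw [if_neg]
            intro h3
            exact hne (hg (h3.trans ha0.symm))
          · simp
        rw [h2] at h
        simpa using h)
    refine ⟨Fin.cons g f, fun k => ?_, fun a b => ?_⟩
    · refine Fin.cases ?_ (fun k => ?_) k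
      · simpa using hg
      · simpa using hf k
    · have h := hfB a b
      rw [Finset.card_filter] at h ⊢
      rw [Fin.sum_univ_succ]
      simp only [Fin.cons_zero, Fin.cons_succ, h]
      rw [add_comm]
      exact hsplit a b

theorem stmt8 {J C I : Type*}
    [Fintype J] [Fintype C] [Fintype I]
    [DecidableEq J] [DecidableEq C] [DecidableEq I]
    [Nonempty J] [Nonempty C] [Nonempty I]
    (M : J → C → I)
    (hM : ∀ i : I,
      ((univ.filter fun jc : J × C => M jc.1 jc.2 = i).card) ≤ Fintype.card C) :
    ∃ M' : J → C → I,
      -- (1) same row multisets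
      (∀ (j : J) (i : I),
        (univ.filter fun c : C => M' j c = i).card =
          (univ.filter fun c : C => M j c = i).card) ∧
      -- (2) every value appears at most once in each column
      (∀ c : C, Function.Injective fun j : J => M' j c) := by
  classical
  set A : J → I → ℕ := fun j i => (univ.filter fun c : C => M j c = i).card with hA
  have hrow : ∀ j, ∑ i, A j i = Fintype.card C := by
    intro j
    have := Finset.card_eq_sum_card_fiberwise (f := M j) (s := univ) (t := univ) (by simp)
    simpa [hA] using this.symm
  have hcol : ∀ i, ∑ j, A j i ≤ Fintype.card C := by
    intro i
    refine le_trans (le_of_eq ?_) (hM i)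
    simp only [hA, Finset.card_filter]
    rw [Fintype.sum_prod_type]
  let B : J ⊕ I → I ⊕ J → ℕ := fun x y =>
    match x, y with
    | .inl j, .inl i => A j i
    | .inl _, .inr _ => 0
    | .inr i, .inl i' => if i = i' then Fintype.card C - ∑ j, A j i else 0
    | .inr i, .inr j => A j i
  obtain ⟨f, hf, hfB⟩ := regular_decomp (α := J ⊕ I) (β := I ⊕ J)
    (by simp [add_comm]) (Fintype.card C) B
    (by
      rintro (j | i)
      · simp [B, hrow]
      · have := hcol i
        simp [B]
        omega)
    (by
      rintro (i | j)
      · have := hcol i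
        simp [B]
        omega
      · simp [B, hrow])
  have hinl : ∀ k j, ∃ i, f k (.inl j) = .inl i := by
    intro k j
    rcases h : f k (.inl j) with i | j'
    · exact ⟨i, rfl⟩
    · exfalso
      have h0 := hfB (.inl j) (.inr j')
      simp only [B, Finset.card_eq_zero] at h0
      have : k ∈ (univ.filter fun k => f k (.inl j) = .inr j') := by simp [h]
      rw [h0] at this
      simp at this
  choose F hF using hinl
  let e := Fintype.equivFin C
  refine ⟨fun j c => F (e c) j, fun j i => ?_, fun c j j' h => ?_⟩
  · have h := hfB (.inl j) (.inl i)
    simp only [hF, Sum.inl.injEq] at h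
    change _ = A j i
    rw [show A j i = B (.inl j) (.inl i) from rfl, ← h, Finset.card_filter, Finset.card_filter]
    exact Equiv.sum_comp e fun k => if F k j = i then 1 else 0
  · have h' : F (e c) j = F (e c) j' := h
    have := hf (e c) (a₁ := .inl j) (a₂ := .inl j') (by rw [hF, hF, h'])
    simpa using this
end

section
/- Let J, C, I be finite nonempty sets and let M : J × C → I be a matrix such that every value i ∈ I appears in at most |C| entries of M. Define the badness of value i as β_i(M) = |{(j,c) ∈ J×C : M(j,c) = i}| − |{c ∈ C : ∃ j ∈ J, M(j,c) = i}| and the badness of M as β(M) = Σ_{i∈I} β_i(M). If some value appears more than once in some column of M (equivalently β(M) > 0), then there exists a matrix M'' : J × C → I with the same row multisets as M (i.e., |{c : M''(j,c) = i}| = |{c : M(j,c) = i}| for all j ∈ J, i ∈ I), with every value still appearing in at most |C| entries, and with β(M'') ≤ β(M) − 1. -/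
/-!
STATEMENT 9: one step of the swapping algorithm.  The badness of a
value `i` in a matrix `M : J → C → I` is the number of entries with
value `i` minus the number of columns containing `i`; the badness of
`M` is the sum over all values.  If some value appears more than once
in some column, then there is a matrix `M''` with the same row
multisets, every value still appearing in at most `|C|` entries, and
badness at least one smaller.
-/

open Finset

/-- Badness of value `i` in matrix `M`. -/
def badnessAt {J C I : Type*} [Fintype J] [Fintype C] [DecidableEq I]
    (M : J → C → I) (i : I) : ℤ :=
  ((univ.filter fun jc : J × C => M jc.1 jc.2 = i).card : ℤ) -
    ((univ.filter fun c : C => ∃ j : J, M j c = i).card : ℤ)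

/-- Badness of matrix `M`. -/
def badness {J C I : Type*} [Fintype J] [Fintype C] [Fintype I] [DecidableEq I]
    (M : J → C → I) : ℤ :=
  ∑ i, badnessAt M i

/-- Signs balancing a finite family of (signed) edge vectors. -/
theorem balance_signs {J I : Type*} [DecidableEq J] [DecidableEq I] (n : ℕ) :
    ∀ (S : Finset J) (e : J → I → ℤ), S.card = n →
      (∀ j ∈ S, ∃ a b : I, ∀ v, e j v = (if a = v then 1 else 0) - (if b = v then 1 else 0)) →
      ∃ s : J → ℤ, (∀ j, s j = 1 ∨ s j = -1) ∧ ∀ v, |∑ j ∈ S, s j * e j v| ≤ 1 := by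
  induction n with
  | zero =>
    intro S e hS _
    refine ⟨fun _ => 1, fun _ => Or.inl rfl, fun v => ?_⟩
    rw [Finset.card_eq_zero] at hS
    simp [hS]
  | succ n ih =>
    intro S e hS he
    by_cases hsh : ∃ j₁ ∈ S, ∃ j₂ ∈ S, j₁ ≠ j₂ ∧ ∃ v, e j₁ v ≠ 0 ∧ e j₂ v ≠ 0
    · obtain ⟨j₁, h₁, j₂, h₂, hne, v, hv₁, hv₂⟩ := hsh
      have key : ∃ t : ℤ, (t = 1 ∨ t = -1) ∧ ∃ a b : I, ∀ w, e j₁ w + t * e j₂ w =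
          (if a = w then 1 else 0) - (if b = w then 1 else 0) := by
        obtain ⟨a, b, hab⟩ := he j₁ h₁
        obtain ⟨c, d, hcd⟩ := he j₂ h₂
        have ha : a = v ∨ b = v := by
          by_contra! h
          exact hv₁ (by rw [hab]; simp [h.1, h.2])
        have hc : c = v ∨ d = v := by
          by_contra! h
          exact hv₂ (by rw [hcd]; simp [h.1, h.2])
        rcases ha with rfl | rfl <;> rcases hc with rfl | rfl
        · exact ⟨-1, Or.inr rfl, d, b, fun w => by rw [hab, hcd]; ring⟩
        · exact ⟨1, Or.inl rfl, c, b, fun w => by rw [hab, hcd]; ring⟩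
        · exact ⟨1, Or.inl rfl, a, d, fun w => by rw [hab, hcd]; ring⟩
        · exact ⟨-1, Or.inr rfl, a, c, fun w => by rw [hab, hcd]; ring⟩
      obtain ⟨t, ht, a, b, hab⟩ := key
      have hmem₁ : j₁ ∈ S.erase j₂ := Finset.mem_erase.2 ⟨hne, h₁⟩
      obtain ⟨s, hs, hsum⟩ := ih (S.erase j₂)
        (fun j w => if j = j₁ then e j₁ w + t * e j₂ w else e j w)
        (by rw [Finset.card_erase_of_mem h₂, hS]; rfl)
        (by
          intro j hj
          by_cases hjj : j = j₁
          · exact ⟨a, b, fun w => by simp only [hjj, if_true]; exact hab w⟩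
          · obtain ⟨a₃, b₃, hab₃⟩ := he j (Finset.mem_of_mem_erase hj)
            exact ⟨a₃, b₃, fun w => by simp only [hjj, if_false]; exact hab₃ w⟩)
      refine ⟨fun j => if j = j₂ then t * s j₁ else s j, ?_, ?_⟩
      · intro j
        by_cases hj : j = j₂
        · simp only [hj, if_true]
          rcases ht with rfl | rfl <;> rcases hs j₁ with h | h <;> simp [h]
        · simp only [hj, if_false]; exact hs j
      · intro w
        have := hsum w
        convert this using 2
        rw [← Finset.add_sum_erase _ _ h₂, ← Finset.add_sum_erase _ _ hmem₁,
          ← Finset.add_sum_erase _ _ hmem₁]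
        have hr : ∑ x ∈ (S.erase j₂).erase j₁, (if x = j₂ then t * s j₁ else s x) * e x w =
            ∑ x ∈ (S.erase j₂).erase j₁,
              s x * (if x = j₁ then e j₁ w + t * e j₂ w else e x w) := by
          refine Finset.sum_congr rfl fun x hx => ?_
          simp only [Finset.mem_erase] at hx
          simp [hx.1, hx.2.1]
        rw [hr]
        simp only [if_true, hne, if_false]
        ring
    · push Not at hsh
      refine ⟨fun _ => 1, fun _ => Or.inl rfl, fun v => ?_⟩
      by_cases hz : ∃ j ∈ S, e j v ≠ 0
      · obtain ⟨j, hj, hjv⟩ := hz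
        rw [Finset.sum_eq_single_of_mem j hj
          (fun k hk hkj => by rw [hsh j hj k hk (Ne.symm hkj) v hjv, mul_zero])]
        obtain ⟨a, b, hab⟩ := he j hj
        rw [hab]
        split_ifs <;> simp
      · push Not at hz
        rw [Finset.sum_eq_zero (fun k hk => by rw [hz k hk, mul_zero])]
        simp

/-- Total count of a value is the sum of its row counts. -/
theorem count_rows {J C I : Type*} [Fintype J] [Fintype C] [DecidableEq I]
    (M : J → C → I) (i : I) :
    (univ.filter fun jc : J × C => M jc.1 jc.2 = i).card =
      ∑ j, (univ.filter fun c : C => M j c = i).card := by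
  simp only [Finset.card_filter]
  rw [Fintype.sum_prod_type]

/-- Total count of a value is the sum of its column counts. -/
theorem count_cols {J C I : Type*} [Fintype J] [Fintype C] [DecidableEq I]
    (M : J → C → I) (i : I) :
    (univ.filter fun jc : J × C => M jc.1 jc.2 = i).card =
      ∑ c, (univ.filter fun j : J => M j c = i).card := by
  simp only [Finset.card_filter]
  rw [Fintype.sum_prod_type_right]

theorem stmt9 {J C I : Type*}
    [Fintype J] [Fintype C] [Fintype I]
    [DecidableEq J] [DecidableEq C] [DecidableEq I]
    [Nonempty J] [Nonempty C] [Nonempty I]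
    (M : J → C → I)
    (hM : ∀ i : I,
      ((univ.filter fun jc : J × C => M jc.1 jc.2 = i).card) ≤ Fintype.card C)
    -- some value appears more than once in some column
    (hbad : ∃ c : C, ¬ Function.Injective fun j : J => M j c) :
    ∃ M'' : J → C → I,
      -- same row multisets
      (∀ (j : J) (i : I),
        (univ.filter fun c : C => M'' j c = i).card =
          (univ.filter fun c : C => M j c = i).card) ∧
      -- every value still appears in at most |C| entries
      (∀ i : I,
        ((univ.filter fun jc : J × C => M'' jc.1 jc.2 = i).card) ≤ Fintype.card C) ∧
      -- the badness strictly decreases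
      badness M'' ≤ badness M - 1 := by
  obtain ⟨c₀, hc₀⟩ := hbad
  obtain ⟨j₁, j₂, hj, hjne⟩ : ∃ j₁ j₂, M j₁ c₀ = M j₂ c₀ ∧ j₁ ≠ j₂ := by
    simpa [Function.Injective] using hc₀
  obtain ⟨i₀, hi₀⟩ : ∃ i, M j₂ c₀ = i := ⟨_, rfl⟩
  have htwo : 2 ≤ (univ.filter fun j : J => M j c₀ = i₀).card := by
    have : 1 < (univ.filter fun j : J => M j c₀ = i₀).card :=
      Finset.one_lt_card.2 ⟨j₁, by simp [hj, hi₀], j₂, by simp [hi₀], hjne⟩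
    omega
  -- a column missing the value
  obtain ⟨c₁, hc₁⟩ : ∃ c, (univ.filter fun j : J => M j c = i₀).card = 0 := by
    by_contra! h
    have h1 := hM i₀
    rw [count_cols] at h1
    have h2 : ∑ _c : C, 1 < ∑ c, (univ.filter fun j : J => M j c = i₀).card :=
      Finset.sum_lt_sum (fun c _ => Nat.one_le_iff_ne_zero.2 (h c)) ⟨c₀, mem_univ _, by omega⟩
    simp at h2
    omega
  have hcne : c₁ ≠ c₀ := by rintro rfl; omega
  obtain ⟨s, hs, hbal⟩ := balance_signs _ (univ : Finset J)
    (fun j v => (if M j c₀ = v then 1 else 0) - (if M j c₁ = v then 1 else 0)) rfl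
    (fun j _ => ⟨M j c₀, M j c₁, fun _ => rfl⟩)
  let N : J → C → I := fun j c => if s j = 1 then M j c else M j (Equiv.swap c₀ c₁ c)
  have hrow : ∀ (j : J) (i : I), (univ.filter fun c : C => N j c = i).card =
      (univ.filter fun c : C => M j c = i).card := by
    intro j i
    by_cases h : s j = 1
    · simp [N, h]
    · simp only [N, h, if_false, Finset.card_filter]
      exact Equiv.sum_comp (Equiv.swap c₀ c₁) (fun c => if M j c = i then 1 else 0)
  have hcnt : ∀ i, (univ.filter fun jc : J × C => N jc.1 jc.2 = i).card =
      (univ.filter fun jc : J × C => M jc.1 jc.2 = i).card := by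
    intro i
    rw [count_rows, count_rows]
    exact Finset.sum_congr rfl fun j _ => hrow j i
  -- column counts
  have hoth : ∀ j c, c ≠ c₀ → c ≠ c₁ → N j c = M j c := by
    intro j c h0 h1
    simp [N, Equiv.swap_apply_of_ne_of_ne h0 h1]
  have hN0 : ∀ j, N j c₀ = if s j = 1 then M j c₀ else M j c₁ := by
    intro j; simp [N]
  have hN1 : ∀ j, N j c₁ = if s j = 1 then M j c₁ else M j c₀ := by
    intro j; simp [N]
  have hadd : ∀ i, (univ.filter fun j : J => N j c₀ = i).card +
      (univ.filter fun j : J => N j c₁ = i).card =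
      (univ.filter fun j : J => M j c₀ = i).card +
      (univ.filter fun j : J => M j c₁ = i).card := by
    intro i
    simp only [Finset.card_filter, ← Finset.sum_add_distrib]
    refine Finset.sum_congr rfl fun j _ => ?_
    rw [hN0, hN1]
    by_cases h : s j = 1
    · simp [h]
    · simp only [h, if_false]; exact add_comm _ _
  have hdiff : ∀ i, |((univ.filter fun j : J => N j c₀ = i).card : ℤ) -
      ((univ.filter fun j : J => N j c₁ = i).card : ℤ)| ≤ 1 := by
    intro i
    convert hbal i using 2
    simp only [Finset.card_filter]
    push_cast
    rw [← Finset.sum_sub_distrib]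
    refine Finset.sum_congr rfl fun j _ => ?_
    rw [hN0, hN1]
    rcases hs j with h | h
    · simp [h]
    · simp [h]
  -- number of columns containing a value
  have hpos : ∀ (L : J → C → I) (c : C) (i : I), (∃ j, L j c = i) ↔
      0 < (univ.filter fun j : J => L j c = i).card := by
    intro L c i
    simp [Finset.card_pos, Finset.filter_nonempty_iff]
  have hsplit : ∀ (L : J → C → I) (i : I),
      (univ.filter fun c : C => ∃ j : J, L j c = i).card =
      (if 0 < (univ.filter fun j : J => L j c₀ = i).card then 1 else 0) +
      ((if 0 < (univ.filter fun j : J => L j c₁ = i).card then 1 else 0) +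
      ∑ c ∈ (univ.erase c₀).erase c₁,
        if 0 < (univ.filter fun j : J => L j c = i).card then 1 else 0) := by
    intro L i
    simp only [hpos]
    rw [Finset.card_filter, ← Finset.add_sum_erase _ _ (mem_univ c₀),
      ← Finset.add_sum_erase _ _ (Finset.mem_erase.2 ⟨hcne, mem_univ c₁⟩)]
  have hrest : ∀ i, (∑ c ∈ (univ.erase c₀).erase c₁,
        if 0 < (univ.filter fun j : J => N j c = i).card then 1 else 0) =
      ∑ c ∈ (univ.erase c₀).erase c₁,
        if 0 < (univ.filter fun j : J => M j c = i).card then 1 else 0 := by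
    intro i
    refine Finset.sum_congr rfl fun c hc => ?_
    simp only [Finset.mem_erase] at hc
    simp only [hoth _ c hc.2.1 hc.1]
  have hle : ∀ i, (univ.filter fun c : C => ∃ j : J, M j c = i).card ≤
      (univ.filter fun c : C => ∃ j : J, N j c = i).card := by
    intro i
    rw [hsplit, hsplit, hrest]
    have h1 := hadd i
    have h2 := abs_le.1 (hdiff i)
    split_ifs <;> omega
  have hlt : (univ.filter fun c : C => ∃ j : J, M j c = i₀).card <
      (univ.filter fun c : C => ∃ j : J, N j c = i₀).card := by
    rw [hsplit, hsplit, hrest]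
    have h1 := hadd i₀
    have h2 := abs_le.1 (hdiff i₀)
    split_ifs <;> omega
  refine ⟨N, hrow, fun i => by rw [hcnt]; exact hM i, ?_⟩
  have : badness N < badness M := by
    unfold badness
    refine Finset.sum_lt_sum (fun i _ => ?_) ⟨i₀, mem_univ _, ?_⟩
    · unfold badnessAt
      rw [hcnt]
      have := hle i
      omega
    · unfold badnessAt
      rw [hcnt]
      omega
  omega
end

section
/- If an allocation (H,p) admits a trading path, then it admits a simple trading path (with the same start and end bidders). -/
/-!
Single-valued combinatorial setting.  STATEMENT 11: if an allocation
`(H, p)` admits a trading path, then it admits a simple trading path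
with the same start and end bidders.
-/

open Finset

/-- `(a, t)` is an alternating path with respect to allocation `H`
(with interest sets `S`). -/
def IsAltPath {I R : Type*} (S H : I → Finset R) (k : ℕ)
    (a : Fin (k + 1) → I) (t : Fin k → R) : Prop :=
  ∀ s : Fin k,
    t s ∈ H (a s.castSucc) ∧ t s ∈ S (a s.succ) ∧ t s ∉ H (a s.succ)

/-- `(a, t)` is a trading path with respect to `(H, p)`:
an alternating path whose last bidder has a strictly larger valuation
than the first and a remaining budget at least the first's valuation. -/
def IsTradingPath {I R : Type*} (S H : I → Finset R)
    (v b p : I → ℝ) (k : ℕ) (a : Fin (k + 1) → I) (t : Fin k → R) : Prop :=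
  IsAltPath S H k a t ∧
  v (a 0) < v (a (Fin.last k)) ∧
  v (a 0) ≤ b (a (Fin.last k)) - p (a (Fin.last k))

/-- Alternating paths with prescribed ends, indexed by natural numbers. -/
def NatPath {I R : Type*} (S H : I → Finset R) (x y : I) (k : ℕ)
    (a : ℕ → I) (t : ℕ → R) : Prop :=
  (∀ s < k, t s ∈ H (a s) ∧ t s ∈ S (a (s + 1)) ∧ t s ∉ H (a (s + 1))) ∧
    a 0 = x ∧ a k = y

lemma NatPath.cut_bidder {I R : Type*} {S H : I → Finset R} {x y : I} {k : ℕ}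
    {a : ℕ → I} {t : ℕ → R} (h : NatPath S H x y k a t) (i d : ℕ)
    (hk : i + d ≤ k) (he : a i = a (i + d)) :
    ∃ a' t', NatPath S H x y (k - d) a' t' := by
  obtain ⟨h1, h2, h3⟩ := h
  refine ⟨fun s => if s ≤ i then a s else a (s + d),
    fun s => if s < i then t s else t (s + d), ?_, ?_, ?_⟩
  · intro s hs
    rcases lt_trichotomy s i with hsi | hsi | hsi
    · have := h1 s (by omega)
      simpa [hsi, hsi.le, Nat.succ_le_iff] using this
    · subst hsi
      have := h1 (s + d) (by omega)
      rw [← he] at this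
      simpa [show s + 1 + d = s + d + 1 by omega] using this
    · have := h1 (s + d) (by omega)
      simpa [show ¬ s ≤ i by omega, show ¬ s < i by omega,
        show s + 1 + d = s + d + 1 by omega] using this
  · simpa using h2
  · by_cases hc : k - d ≤ i
    · have e : k - d = i := by omega
      have e' : k = i + d := by omega
      simp only [e, le_refl, if_true]
      rw [he, ← e', h3]
    · simp only [hc, if_false]
      rw [show k - d + d = k by omega, h3]

lemma NatPath.cut_round {I R : Type*} {S H : I → Finset R} {x y : I} {k : ℕ}
    {a : ℕ → I} {t : ℕ → R} (h : NatPath S H x y k a t) (i d : ℕ)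
    (hk : i + d < k) (he : t i = t (i + d)) :
    ∃ a' t', NatPath S H x y (k - d) a' t' := by
  obtain ⟨h1, h2, h3⟩ := h
  refine ⟨fun s => if s ≤ i then a s else a (s + d),
    fun s => if s ≤ i then t s else t (s + d), ?_, ?_, ?_⟩
  · intro s hs
    rcases lt_trichotomy s i with hsi | hsi | hsi
    · have := h1 s (by omega)
      simpa [hsi, hsi.le, Nat.succ_le_iff] using this
    · subst hsi
      have h4 := h1 (s + d) (by omega)
      have h5 := h1 s (by omega)
      rw [← he] at h4
      simpa [show s + 1 + d = s + d + 1 by omega] using ⟨h5.1, h4.2⟩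
    · have := h1 (s + d) (by omega)
      simpa [show ¬ s ≤ i by omega, show ¬ s < i by omega,
        show s + 1 + d = s + d + 1 by omega] using this
  · simpa using h2
  · simp only [show ¬ k - d ≤ i by omega, if_false]
    rw [show k - d + d = k by omega, h3]

theorem stmt11 {I R : Type*} [Fintype I] [DecidableEq I] [Fintype R] [DecidableEq R]
    (m : ℕ) (S H : I → Finset R) (v b p : I → ℝ)
    (hv : ∀ i, 0 < v i)
    (hHS : ∀ i, H i ⊆ S i)
    (hcap : ∀ r : R, (univ.filter fun i : I => r ∈ H i).card ≤ m)
    (hp : ∀ i, p i ≤ b i)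
    (k : ℕ) (a : Fin (k + 1) → I) (t : Fin k → R)
    (hpath : IsTradingPath S H v b p k a t) :
    ∃ (k' : ℕ) (a' : Fin (k' + 1) → I) (t' : Fin k' → R),
      IsTradingPath S H v b p k' a' t' ∧
      Function.Injective a' ∧ Function.Injective t' ∧
      a' 0 = a 0 ∧ a' (Fin.last k') = a (Fin.last k) := by
  classical
  obtain ⟨halt, hval, hbud⟩ := hpath
  rcases Nat.eq_zero_or_pos k with hk0 | hkpos
  · subst hk0
    exact ⟨0, a, t, ⟨halt, hval, hbud⟩, fun x y _ => Subsingleton.elim (α := Fin 1) x y,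
      fun x => x.elim0, rfl, rfl⟩
  have hex : ∃ n a' t', NatPath S H (a 0) (a (Fin.last k)) n a' t' := by
    refine ⟨k, fun n => if h : n < k + 1 then a ⟨n, h⟩ else a 0,
      fun n => if h : n < k then t ⟨n, h⟩ else t ⟨0, hkpos⟩, ?_, ?_, ?_⟩
    · intro s hs
      have := halt ⟨s, hs⟩
      simpa [hs, show s < k + 1 by omega] using this
    · simp
    · simp [Fin.last]
  have hmin : ∀ l < Nat.find hex, ¬ ∃ a' t', NatPath S H (a 0) (a (Fin.last k)) l a' t' :=
    fun l hl => Nat.find_min hex hl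
  obtain ⟨a', t', hP⟩ := Nat.find_spec hex
  generalize Nat.find hex = n at hmin hP
  have hP' := hP
  obtain ⟨h1, h2, h3⟩ := hP'
  have ha : ∀ i j : ℕ, i < j → j ≤ n → a' i ≠ a' j := by
    intro i j hij hj he
    refine hmin (n - (j - i)) (by omega) (hP.cut_bidder i (j - i) (by omega) ?_)
    rw [he, show i + (j - i) = j by omega]
  have ht : ∀ i j : ℕ, i < j → j < n → t' i ≠ t' j := by
    intro i j hij hj he
    refine hmin (n - (j - i)) (by omega) (hP.cut_round i (j - i) (by omega) ?_)
    rw [he, show i + (j - i) = j by omega]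
  refine ⟨n, fun s => a' s, fun s => t' s, ⟨?_, ?_, ?_⟩, ?_, ?_, ?_, ?_⟩
  · intro s
    simpa using h1 s s.2
  · simpa [h2, h3] using hval
  · simpa [h2, h3] using hbud
  · intro x y hxy
    rcases lt_trichotomy x y with h | h | h
    · exact absurd hxy (ha x y h (by omega))
    · exact h
    · exact absurd hxy.symm (ha y x h (by omega))
  · intro x y hxy
    rcases lt_trichotomy x y with h | h | h
    · exact absurd hxy (ht x y h (by omega))
    · exact h
    · exact absurd hxy.symm (ht y x h (by omega))
  · simpa using h2
  · simpa using h3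
end

section
/- Let H and H' be two allocations that both allocate all slots, i.e., |{i ∈ I : r ∈ H_i}| = m and |{i ∈ I : r ∈ H'_i}| = m for every round r. Then the symmetric difference of H and H' — the set of bidder–round pairs (i,r) with r ∈ (H_i \ H'_i) ∪ (H'_i \ H_i) — can be partitioned into edge-disjoint alternating walks with respect to H, i.e., walks (a_1, t_1, a_2, t_2, …, a_{j−1}, t_{j−1}, a_j) whose endpoints are bidders, such that t_k ∈ H_{a_k} \ H'_{a_k} and t_k ∈ H'_{a_{k+1}} \ H_{a_{k+1}} for all 1 ≤ k < j, with every symmetric-difference pair used exactly once across all walks. -/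
/-!
Single-valued combinatorial setting.  STATEMENT 12: if `H` and `H'`
both allocate all `m` slots of every round, then the symmetric
difference of `H` and `H'` decomposes into edge-disjoint alternating
walks with respect to `H`: walks `(a_1, t_1, …, t_{j-1}, a_j)` with
`t_k ∈ H_{a_k} \ H'_{a_k}` and `t_k ∈ H'_{a_{k+1}} \ H_{a_{k+1}}`, such
that every symmetric-difference pair is used exactly once across all
walks.
-/

open Finset

theorem stmt12 {I R : Type*} [Fintype I] [DecidableEq I] [Fintype R] [DecidableEq R]
    (m : ℕ) (S : I → Finset R) (H H' : I → Finset R)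
    (hHS : ∀ i, H i ⊆ S i) (hH'S : ∀ i, H' i ⊆ S i)
    (hfull : ∀ r : R, (univ.filter fun i : I => r ∈ H i).card = m)
    (hfull' : ∀ r : R, (univ.filter fun i : I => r ∈ H' i).card = m) :
    ∃ (W : ℕ) (len : Fin W → ℕ)
      (a : (w : Fin W) → Fin (len w + 1) → I)
      (t : (w : Fin W) → Fin (len w) → R),
      -- each walk is alternating with respect to H (edges in H \ H'
      -- forward, edges in H' \ H backward)
      (∀ (w : Fin W) (s : Fin (len w)),
        t w s ∈ H (a w s.castSucc) ∧ t w s ∉ H' (a w s.castSucc) ∧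
        t w s ∈ H' (a w s.succ) ∧ t w s ∉ H (a w s.succ)) ∧
      -- every pair (i, r) with r ∈ H_i \ H'_i is used exactly once as a
      -- forward edge
      (∀ (i : I) (r : R), r ∈ H i → r ∉ H' i →
        ∃! ws : (w : Fin W) × Fin (len w),
          a ws.1 ws.2.castSucc = i ∧ t ws.1 ws.2 = r) ∧
      -- every pair (i, r) with r ∈ H'_i \ H_i is used exactly once as a
      -- backward edge
      (∀ (i : I) (r : R), r ∈ H' i → r ∉ H i →
        ∃! ws : (w : Fin W) × Fin (len w),
          a ws.1 ws.2.succ = i ∧ t ws.1 ws.2 = r) := by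
  classical
  -- in every round, the forward and the backward edges are equinumerous
  have hcard : ∀ r : R, Nonempty ({i : I // r ∈ H i ∧ r ∉ H' i} ≃ {i : I // r ∈ H' i ∧ r ∉ H i}) := by
    intro r
    refine ⟨Fintype.equivOfCardEq ?_⟩
    rw [Fintype.card_subtype, Fintype.card_subtype]
    have h := Finset.card_sdiff_comm ((hfull r).trans (hfull' r).symm)
    convert h using 2 <;> (ext i; simp)
  have e := fun r => Classical.choice (hcard r)
  let E := (r : R) × {i : I // r ∈ H i ∧ r ∉ H' i}
  let f : Fin (Fintype.card E) ≃ E := (Fintype.equivFin E).symm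
  -- one walk of length one for each forward edge
  refine ⟨Fintype.card E, fun _ => 1,
    fun w s => if s = 0 then ((f w).2 : I) else (e (f w).1 (f w).2 : I),
    fun w _ => (f w).1, ?_, ?_, ?_⟩
  · intro w s
    have hs : s = 0 := Subsingleton.elim _ _
    subst hs
    have h1 := (f w).2.2
    have h2 := (e (f w).1 (f w).2).2
    simp only [Fin.castSucc_zero, if_true, Fin.succ_ne_zero, if_false]
    exact ⟨h1.1, h1.2, h2.1, h2.2⟩
  · intro i r h1 h2
    refine ⟨⟨f.symm ⟨r, i, h1, h2⟩, 0⟩, ?_, ?_⟩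
    · simp only [Fin.castSucc_zero, if_true]
      rw [Equiv.apply_symm_apply]
      exact ⟨rfl, rfl⟩
    rintro ⟨w, s⟩ ⟨ha, ht⟩
    have hs : s = 0 := Subsingleton.elim _ _
    subst hs
    simp only [Fin.castSucc_zero, if_true] at ha ht
    have hw : w = f.symm ⟨r, i, h1, h2⟩ := by
      rw [Equiv.eq_symm_apply]
      generalize f w = x at *
      obtain ⟨r', i', h'⟩ := x
      dsimp only at ha ht
      subst ha ht
      rfl
    rw [hw]
  · intro i r h1 h2
    refine ⟨⟨f.symm ⟨r, (e r).symm ⟨i, h1, h2⟩⟩, 0⟩, ?_, ?_⟩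
    · simp only [Fin.succ_ne_zero, if_false]
      rw [Equiv.apply_symm_apply]
      simp
    rintro ⟨w, s⟩ ⟨ha, ht⟩
    have hs : s = 0 := Subsingleton.elim _ _
    subst hs
    simp only [Fin.succ_ne_zero, if_false] at ha ht
    have hw : w = f.symm ⟨r, (e r).symm ⟨i, h1, h2⟩⟩ := by
      rw [Equiv.eq_symm_apply]
      generalize f w = x at *
      obtain ⟨r', i'⟩ := x
      dsimp only at ha ht
      subst ht
      subst ha
      simp
    rw [hw]
end

section
/- Assume every round is contained in the interest sets of at least m bidders. A legal allocation (H,p) is Pareto optimal if and only if (1) all slots of all rounds are sold, i.e., |{i ∈ I : r ∈ H_i}| = m for every round r, and (2) there is no simple trading path with respect to (H,p). -/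
/-!
Single-valued combinatorial setting.  STATEMENT 13: assuming every
round interests at least `m` bidders, a legal allocation `(H, p)` is
Pareto optimal iff all slots of all rounds are sold and there is no
simple trading path.
-/

open Finset

/-- Legality of an allocation `(H, p)` for `m` identical slots per round. -/
def LegalComb {I R : Type*} [Fintype I] [DecidableEq R]
    (m : ℕ) (S : I → Finset R) (b : I → ℝ)
    (H : I → Finset R) (p : I → ℝ) : Prop :=
  (∀ i, H i ⊆ S i) ∧
  (∀ r : R, (univ.filter fun i : I => r ∈ H i).card ≤ m) ∧
  (∀ i, p i ≤ b i)

/-- Pareto optimality of a legal allocation `(H, p)`: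
no legal allocation makes no bidder and the auctioneer worse off and
somebody strictly better off.  Bidder `i`'s utility is
`v_i · |H_i| − p_i`; the auctioneer's utility is `Σ_i p_i`. -/
def ParetoOptComb {I R : Type*} [Fintype I] [DecidableEq R]
    (m : ℕ) (S : I → Finset R) (v b : I → ℝ)
    (H : I → Finset R) (p : I → ℝ) : Prop :=
  ¬ ∃ (H' : I → Finset R) (p' : I → ℝ),
      LegalComb m S b H' p' ∧
      (∀ i, v i * (H i).card - p i ≤ v i * (H' i).card - p' i) ∧
      (∑ i, p i ≤ ∑ i, p' i) ∧
      ((∃ i, v i * (H i).card - p i < v i * (H' i).card - p' i) ∨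
        ∑ i, p i < ∑ i, p' i)

/-- Walk of length `n` from `x` to `y` along a relation. -/
def WalkN {I : Type*} (E : I → I → Prop) (x : I) : ℕ → I → Prop
  | 0, y => x = y
  | n + 1, y => ∃ z, WalkN E x n z ∧ E z y

theorem walkN_shortest {I : Type*} (E : I → I → Prop) (x : I) (n : ℕ) :
    ∀ y, WalkN E x n y → (∀ m < n, ¬ WalkN E x m y) →
      ∃ a : ℕ → I, a n = y ∧ (∀ s < n, E (a s) (a (s + 1))) ∧
        ∀ s ≤ n, WalkN E x s (a s) ∧ ∀ m < s, ¬ WalkN E x m (a s) := by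
  induction n with
  | zero =>
    intro y hy _
    refine ⟨fun _ => y, rfl, by simp, ?_⟩
    intro s hs
    obtain rfl : s = 0 := by omega
    exact ⟨hy, by simp⟩
  | succ n ih =>
    intro y hy hmin
    obtain ⟨z, hz, hzy⟩ := id hy
    obtain ⟨a, ha, hE, hW⟩ := ih z hz (fun m hm h => hmin (m + 1) (by omega) ⟨z, h, hzy⟩)
    refine ⟨fun s => if s ≤ n then a s else y, by simp, ?_, ?_⟩
    · intro s hs
      rcases Nat.lt_or_ge s n with h | h
      · have h1 : s ≤ n := by omega
        have h2 : s + 1 ≤ n := by omega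
        simp only [h1, h2, if_true]
        exact hE s h
      · obtain rfl : s = n := by omega
        simp [ha, hzy]
    · intro s hs
      rcases Nat.lt_or_ge n s with h | h
      · obtain rfl : s = n + 1 := by omega
        simp only [show ¬ (n + 1 ≤ n) by omega, if_false]
        exact ⟨hy, hmin⟩
      · simp only [h, if_true]
        exact hW s h

theorem walkN_of_reach {I : Type*} (E : I → I → Prop) (x y : I)
    (h : Relation.ReflTransGen E x y) : ∃ n, WalkN E x n y := by
  induction h with
  | refl => exact ⟨0, rfl⟩
  | tail _ hE ih =>
    obtain ⟨n, hn⟩ := ih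
    exact ⟨n + 1, _, hn, hE⟩

/-- One round can be handed over from `i` to `j`. -/
def AltEdge {I R : Type*} (S H : I → Finset R) (i j : I) : Prop :=
  ∃ r, r ∈ H i ∧ r ∈ S j ∧ r ∉ H j

theorem simple_of_reach {I R : Type*} (S H : I → Finset R) (x y : I)
    (h : Relation.ReflTransGen (AltEdge S H) x y) :
    ∃ (k : ℕ) (a : Fin (k + 1) → I) (t : Fin k → R), IsAltPath S H k a t ∧
      Function.Injective a ∧ Function.Injective t ∧ a 0 = x ∧ a (Fin.last k) = y := by
  classical
  have hex := walkN_of_reach _ x y h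
  obtain ⟨a, ha, hE, hW⟩ := walkN_shortest _ x (Nat.find hex) y (Nat.find_spec hex)
    (fun m hm => Nat.find_min hex hm)
  generalize Nat.find hex = k at a ha hE hW
  have hE' : ∀ s : Fin k, AltEdge S H (a s) (a (s + 1)) := fun s => hE s s.2
  choose t ht using hE'
  refine ⟨k, fun s => a s, t, ?_, ?_, ?_, ?_, ?_⟩
  · intro s
    simpa using ht s
  · intro s s' hss
    have hss' : a s = a s' := hss
    have h1 := hW s (by omega)
    have h2 := hW s' (by omega)
    rw [hss'] at h1
    ext
    by_contra hne
    rcases Nat.lt_or_gt_of_ne hne with h | h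
    · exact h2.2 _ h h1.1
    · exact h1.2 _ h h2.1
  · have key : ∀ s s' : Fin k, s.val < s'.val → t s ≠ t s' := by
      intro s s' hlt heq
      have h1 := hW s (by omega)
      have h2 := hW (s' + 1) (by omega)
      refine h2.2 (s + 1) (by omega) ⟨a s, h1.1, t s, (ht s).1, ?_, ?_⟩
      · rw [heq]; exact (ht s').2.1
      · rw [heq]; exact (ht s').2.2
    intro s s' hss
    ext
    by_contra hne
    rcases Nat.lt_or_gt_of_ne hne with h | h
    · exact key _ _ h hss
    · exact key _ _ h hss.symm
  · exact ((hW 0 (by omega)).1).symm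
  · simpa using ha

theorem swap_one {I R : Type*} [Fintype I] [DecidableEq I] [DecidableEq R]
    (S H : I → Finset R) (hHS : ∀ i, H i ⊆ S i) (i j : I) (hij : i ≠ j) (r : R)
    (hi : r ∈ H i) (hj : r ∈ S j) (hj' : r ∉ H j) :
    ∃ H' : I → Finset R, (∀ l, H' l ⊆ S l) ∧
      (∀ q, (univ.filter fun l : I => q ∈ H' l).card = (univ.filter fun l : I => q ∈ H l).card) ∧
      (∀ l, l ≠ i → l ≠ j → H' l = H l) ∧ H j ⊆ H' j ∧
      (∀ l, (H' l).card + (if l = i then 1 else 0) = (H l).card + (if l = j then 1 else 0)) := by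
  refine ⟨fun l => if l = i then (H i).erase r else if l = j then insert r (H j) else H l,
    ?_, ?_, ?_, ?_, ?_⟩
  · intro l q hq
    dsimp only at hq
    split_ifs at hq with h1 h2
    · subst h1; exact hHS _ (Finset.mem_of_mem_erase hq)
    · subst h2
      rcases Finset.mem_insert.1 hq with h | h
      · rw [h]; exact hj
      · exact hHS _ h
    · exact hHS _ hq
  · intro q
    by_cases hq : q = r
    · subst hq
      have : (univ.filter fun l : I => q ∈ (if l = i then (H i).erase q else
          if l = j then insert q (H j) else H l)) =
          insert j ((univ.filter fun l : I => q ∈ H l).erase i) := by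
        ext l
        by_cases h1 : l = i
        · subst h1; simp [hij]
        · by_cases h2 : l = j
          · subst h2; simp [h1]
          · simp [h1, h2]
      rw [this, Finset.card_insert_of_notMem (by simp [hj']), Finset.card_erase_add_one (by simp [hi])]
    · congr 1
      ext l
      by_cases h1 : l = i
      · subst h1; simp [hq]
      · by_cases h2 : l = j
        · subst h2; simp [h1, hq]
        · simp [h1, h2]
  · intro l h1 h2
    simp [h1, h2]
  · simp [hij.symm]
  · intro l
    by_cases h1 : l = i
    · subst h1; simp [hij, Finset.card_erase_add_one hi]
    · by_cases h2 : l = j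
      · subst h2; simp [h1, Finset.card_insert_of_notMem hj']
      · simp [h1, h2]

theorem swap_path {I R : Type*} [Fintype I] [DecidableEq I] [DecidableEq R]
    (S H : I → Finset R) (hHS : ∀ i, H i ⊆ S i) (k : ℕ) :
    ∀ (a : Fin (k + 1) → I) (t : Fin k → R), IsAltPath S H k a t → Function.Injective a →
    ∃ H' : I → Finset R, (∀ l, H' l ⊆ S l) ∧
      (∀ q, (univ.filter fun l : I => q ∈ H' l).card = (univ.filter fun l : I => q ∈ H l).card) ∧
      (∀ l, (∀ s, l ≠ a s) → H' l = H l) ∧ H (a (Fin.last k)) ⊆ H' (a (Fin.last k)) ∧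
      (∀ l, (H' l).card + (if l = a 0 then 1 else 0) =
        (H l).card + (if l = a (Fin.last k) then 1 else 0)) := by
  induction k with
  | zero =>
    intro a t _ _
    exact ⟨H, hHS, fun _ => rfl, fun _ _ => rfl, subset_rfl, fun l => by simp⟩
  | succ k ih =>
    intro a t hp ha
    obtain ⟨H1, h1S, h1c, h1r, h1l, h1n⟩ := ih (fun s => a s.castSucc) (fun s => t s.castSucc)
      (fun s => by simpa using hp s.castSucc)
      (fun s s' h => Fin.castSucc_injective _ (ha h))
    obtain ⟨p1, p2, p3⟩ := hp (Fin.last k)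
    rw [Fin.succ_last] at p2 p3
    have hlast : H1 (a (Fin.last (k + 1))) = H (a (Fin.last (k + 1))) := by
      apply h1r
      intro s h
      exact (Fin.castSucc_lt_last s).ne (ha h).symm
    have hne : a (Fin.last k).castSucc ≠ a (Fin.last (k + 1)) := by
      intro h
      exact (Fin.castSucc_lt_last (Fin.last k)).ne (ha h)
    obtain ⟨H2, h2S, h2c, h2r, h2l, h2n⟩ := swap_one S H1 h1S _ _ hne (t (Fin.last k))
      (h1l p1) p2 (by rw [hlast]; exact p3)
    refine ⟨H2, h2S, fun q => (h2c q).trans (h1c q), ?_, ?_, ?_⟩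
    · intro l hl
      rw [h2r l (hl _) (hl _)]
      exact h1r l (fun s => hl _)
    · rw [← hlast]; exact h2l
    · intro l
      have e1 := h1n l
      have e2 := h2n l
      have e0 : (0 : Fin (k + 1)).castSucc = 0 := rfl
      rw [e0] at e1
      omega

theorem round_sum {I : Type*} [Fintype I] [DecidableEq I] (c : I → ℝ) (hc : ∀ i, 0 ≤ c i)
    (A B : Finset I) (hcard : B.card ≤ A.card) (hAB : ∀ i ∈ A, ∀ j ∈ B, j ∉ A → c j ≤ c i) :
    ∑ i ∈ B, c i ≤ ∑ i ∈ A, c i := by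
  rw [← Finset.sum_inter_add_sum_sdiff B A, ← Finset.sum_inter_add_sum_sdiff A B,
    Finset.inter_comm B A]
  refine add_le_add le_rfl ?_
  have hc' : (B \ A).card ≤ (A \ B).card := by
    have h1 := Finset.card_sdiff_add_card_inter B A
    have h2 := Finset.card_sdiff_add_card_inter A B
    rw [Finset.inter_comm] at h1
    omega
  rcases (B \ A).eq_empty_or_nonempty with h | h
  · rw [h]; simp; exact Finset.sum_nonneg fun i _ => hc i
  · obtain ⟨j, hj, hmax⟩ := Finset.exists_max_image (B \ A) c h
    have hj' := Finset.mem_sdiff.1 hj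
    calc ∑ i ∈ B \ A, c i ≤ (B \ A).card • c j := Finset.sum_le_card_nsmul _ _ _ hmax
      _ ≤ (A \ B).card • c j := by
        exact nsmul_le_nsmul_left (hc j) hc'
      _ ≤ ∑ i ∈ A \ B, c i := by
        apply Finset.card_nsmul_le_sum
        intro i hi
        exact hAB i (Finset.mem_sdiff.1 hi).1 j hj'.1 hj'.2

theorem sum_by_rounds {I R : Type*} [Fintype I] [Fintype R] [DecidableEq R]
    (c : I → ℝ) (H : I → Finset R) :
    ∑ i, c i * (H i).card = ∑ r : R, ∑ i ∈ univ.filter (fun i : I => r ∈ H i), c i := by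
  simp_rw [Finset.sum_filter]
  rw [Finset.sum_comm]
  refine Finset.sum_congr rfl fun i _ => ?_
  rw [← Finset.sum_filter]
  simp [mul_comm]

theorem stmt13 {I R : Type*} [Fintype I] [DecidableEq I] [Fintype R] [DecidableEq R]
    (m : ℕ) (S : I → Finset R) (v b : I → ℝ)
    (hv : ∀ i, 0 < v i)
    -- every round is contained in the interest sets of at least m bidders
    (hS : ∀ r : R, m ≤ (univ.filter fun i : I => r ∈ S i).card)
    (H : I → Finset R) (p : I → ℝ)
    (hlegal : LegalComb m S b H p) :
    ParetoOptComb m S v b H p ↔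
      ((∀ r : R, (univ.filter fun i : I => r ∈ H i).card = m) ∧
        ¬ ∃ (k : ℕ) (a : Fin (k + 1) → I) (t : Fin k → R),
          IsTradingPath S H v b p k a t ∧
          Function.Injective a ∧ Function.Injective t) := by
  classical
  obtain ⟨hHS, hcnt, hb⟩ := hlegal
  constructor
  · intro hPO
    refine ⟨?_, ?_⟩
    · intro r
      by_contra hne
      have hlt := lt_of_le_of_ne (hcnt r) hne
      obtain ⟨i, hi, hi'⟩ := Finset.exists_mem_notMem_of_card_lt_card (hlt.trans_le (hS r))
      simp only [Finset.mem_filter, Finset.mem_univ, true_and] at hi hi'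
      apply hPO
      have hcard : ∀ l, ((if l = i then insert r (H l) else H l).card : ℝ) =
          (H l).card + if l = i then 1 else 0 := by
        intro l
        by_cases h : l = i
        · subst h; simp [Finset.card_insert_of_notMem hi']
        · simp [h]
      refine ⟨fun l => if l = i then insert r (H l) else H l, p, ⟨?_, ?_, hb⟩, ?_, le_rfl,
        Or.inl ⟨i, ?_⟩⟩
      · intro l q hq
        dsimp only at hq
        split_ifs at hq with h
        · subst h
          rcases Finset.mem_insert.1 hq with h | h
          · rw [h]; exact hi
          · exact hHS _ h
        · exact hHS _ hq
      · intro q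
        by_cases hq : q = r
        · subst hq
          refine le_trans (Finset.card_le_card (t := insert i (univ.filter fun l : I => q ∈ H l))
            ?_) ((Finset.card_insert_le _ _).trans hlt)
          intro l hl
          by_cases h : l = i
          · simp [h]
          · simpa [h] using hl
        · refine le_trans (Finset.card_le_card ?_) (hcnt q)
          intro l hl
          by_cases h : l = i
          · subst h; simpa [hq] using hl
          · simpa [h] using hl
      · intro l
        simp only [hcard]
        have := hv l
        split_ifs <;> nlinarith
      · have h1 := hv i
        have h2 := hcard i
        simp only [if_true] at h2 ⊢
        rw [h2]
        nlinarith
    · rintro ⟨k, a, t, ⟨hp, hlt, hbud⟩, ha, -⟩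
      obtain ⟨H', h1, h2, -, -, h3⟩ := swap_path S H hHS k a t hp ha
      have h3' : ∀ l, ((H' l).card : ℝ) + (if l = a 0 then 1 else 0) =
          (H l).card + (if l = a (Fin.last k) then 1 else 0) := fun l => by exact_mod_cast h3 l
      have hne : a (Fin.last k) ≠ a 0 := fun h => by rw [h] at hlt; exact lt_irrefl _ hlt
      have hv0 := hv (a 0)
      apply hPO
      refine ⟨H', fun l => p l - (if l = a 0 then v (a 0) else 0) +
        (if l = a (Fin.last k) then v (a 0) else 0), ⟨h1, fun q => (h2 q).trans_le (hcnt q), ?_⟩,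
        ?_, ?_, Or.inl ⟨a (Fin.last k), ?_⟩⟩
      · intro l
        have := hb l
        by_cases e1 : l = a (Fin.last k)
        · subst e1; simp only [hne, if_true, if_false]; linarith
        · simp only [e1, if_false]; split_ifs <;> linarith
      · intro l
        have e := h3' l
        by_cases e1 : l = a (Fin.last k)
        · subst e1
          simp only [hne, if_true, if_false] at e ⊢
          rw [show ((H' (a (Fin.last k))).card : ℝ) = (H (a (Fin.last k))).card + 1 by linarith]
          nlinarith
        · by_cases e2 : l = a 0
          · subst e2
            simp only [hne.symm, if_true, if_false] at e ⊢
            rw [show ((H (a 0)).card : ℝ) = (H' (a 0)).card + 1 by linarith]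
            nlinarith
          · simp only [e1, e2, if_false, add_zero] at e ⊢
            rw [e]; linarith
      · simp [Finset.sum_add_distrib, Finset.sum_sub_distrib]
      · have e := h3' (a (Fin.last k))
        simp only [hne, if_true, if_false] at e ⊢
        rw [show ((H' (a (Fin.last k))).card : ℝ) = (H (a (Fin.last k))).card + 1 by linarith]
        nlinarith
  · rintro ⟨hsold, hno⟩ ⟨H', p', ⟨hHS', hcnt', hb'⟩, hu, hsum, hstrict⟩
    have hmin : ∀ i, ∃ x, Relation.ReflTransGen (AltEdge S H) x i ∧
        ∀ y, Relation.ReflTransGen (AltEdge S H) y i → v x ≤ v y := by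
      intro i
      obtain ⟨x, hx, hx'⟩ := Finset.exists_min_image
        (univ.filter fun x => Relation.ReflTransGen (AltEdge S H) x i) v
        ⟨i, by simp [Relation.ReflTransGen.refl]⟩
      exact ⟨x, by simpa using hx, fun y hy => hx' y (by simpa using hy)⟩
    choose f hf hfm using hmin
    have hfi : ∀ i, v (f i) ≤ v i := fun i => hfm i i Relation.ReflTransGen.refl
    have hbud : ∀ i, v (f i) < v i → b i - p i < v (f i) := by
      intro i hi
      by_contra hge
      obtain ⟨k, a, t, hp, ha, ht, e0, e1⟩ := simple_of_reach S H _ _ (hf i)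
      exact hno ⟨k, a, t, ⟨hp, by rw [e0, e1]; exact hi, by rw [e0, e1]; linarith⟩, ha, ht⟩
    have hround : ∑ i, v (f i) * (H' i).card ≤ ∑ i, v (f i) * (H i).card := by
      rw [sum_by_rounds, sum_by_rounds]
      refine Finset.sum_le_sum fun r _ => ?_
      apply round_sum _ (fun i => (hv _).le)
      · rw [hsold r]; exact hcnt' r
      · intro i hi j hj hj'
        simp only [Finset.mem_filter, Finset.mem_univ, true_and] at hi hj hj'
        exact hfm j _ ((hf i).tail ⟨r, hi, hHS' j hj, hj'⟩)
    have hkey : ∀ i, p' i - p i ≤ v (f i) * (H' i).card - v (f i) * (H i).card ∧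
        (v i * (H i).card - p i < v i * (H' i).card - p' i →
          p' i - p i < v (f i) * (H' i).card - v (f i) * (H i).card) := by
      intro i
      have hui := hu i
      rcases (hfi i).eq_or_lt with h | h
      · rw [h]
        exact ⟨by linarith, fun _ => by linarith⟩
      · rcases Nat.lt_or_ge (H i).card (H' i).card with hd | hd
        · have hd' : ((H i).card : ℝ) + 1 ≤ (H' i).card := by exact_mod_cast hd
          have h1 := hbud i h
          have h2 := hb' i
          have h3 := hv (f i)
          have : p' i - p i < v (f i) * (H' i).card - v (f i) * (H i).card := by nlinarith
          exact ⟨this.le, fun _ => this⟩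
        · have hd' : ((H' i).card : ℝ) ≤ (H i).card := by exact_mod_cast hd
          have h4 : 0 ≤ (v i - v (f i)) * ((H i).card - (H' i).card) :=
            mul_nonneg (by linarith) (by linarith)
          exact ⟨by nlinarith, fun _ => by nlinarith⟩
    rw [← sub_nonpos, ← Finset.sum_sub_distrib] at hround
    have hle : ∑ i, (p' i - p i) ≤ ∑ i, (v (f i) * (H' i).card - v (f i) * (H i).card) :=
      Finset.sum_le_sum fun i _ => (hkey i).1
    rcases hstrict with ⟨i, hi⟩ | hs
    · have hlt : ∑ i, (p' i - p i) < ∑ i, (v (f i) * (H' i).card - v (f i) * (H i).card) :=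
        Finset.sum_lt_sum (fun i _ => (hkey i).1) ⟨i, Finset.mem_univ i, (hkey i).2 hi⟩
      rw [Finset.sum_sub_distrib] at hlt
      linarith
    · rw [Finset.sum_sub_distrib] at hle
      linarith
end

section
/- Consider any two-bidder two-item mechanism with public budgets that is incentive compatible, Pareto optimal, bidder rational, and auctioneer rational. Then on every input on which bidder 1 reports positive marginal valuations v_1(1) > 0 and v_1(2) > 0 and the mechanism assigns both items to bidder 1 (q_1 = 2), the payment of bidder 2 is p_2 = 0. -/
/-!
Two-bidder two-item multi-unit auction with public budgets and
diminishing marginal valuations.  STATEMENT 14: for any incentive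
compatible, Pareto optimal, bidder rational and auctioneer rational
mechanism, whenever bidder 1 reports positive marginal valuations and
wins both items, bidder 2 pays nothing.

A reported valuation is a pair `(v(1), v(2)) : ℝ × ℝ` with
`v(1) ≥ v(2) ≥ 0`.  The mechanism is given by the quantity function
`Q` and the payment function `P`.
-/

/-- A diminishing marginal valuation for two items. -/
def Dim (v : ℝ × ℝ) : Prop := 0 ≤ v.2 ∧ v.2 ≤ v.1

/-- Total value of receiving `q` items under marginal valuation `v`. -/
def val2 (v : ℝ × ℝ) (q : ℕ) : ℝ :=
  match q with
  | 0 => 0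
  | 1 => v.1
  | _ => v.1 + v.2

theorem stmt14 (b1 b2 : ℝ) (hb1 : 0 < b1) (hb2 : 0 < b2)
    (Q : ℝ × ℝ → ℝ × ℝ → ℕ × ℕ) (P : ℝ × ℝ → ℝ × ℝ → ℝ × ℝ)
    -- the mechanism always outputs a feasible outcome
    (hfeas : ∀ v1 v2, Dim v1 → Dim v2 →
      (Q v1 v2).1 + (Q v1 v2).2 ≤ 2 ∧ (P v1 v2).1 ≤ b1 ∧ (P v1 v2).2 ≤ b2)
    -- bidder rationality
    (hBR : ∀ v1 v2, Dim v1 → Dim v2 →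
      0 ≤ val2 v1 (Q v1 v2).1 - (P v1 v2).1 ∧
      0 ≤ val2 v2 (Q v1 v2).2 - (P v1 v2).2)
    -- auctioneer rationality
    (hAR : ∀ v1 v2, Dim v1 → Dim v2 → 0 ≤ (P v1 v2).1 + (P v1 v2).2)
    -- incentive compatibility for bidder 1
    (hIC1 : ∀ v1 v1' v2, Dim v1 → Dim v1' → Dim v2 →
      val2 v1 (Q v1' v2).1 - (P v1' v2).1 ≤ val2 v1 (Q v1 v2).1 - (P v1 v2).1)
    -- incentive compatibility for bidder 2
    (hIC2 : ∀ v1 v2 v2', Dim v1 → Dim v2 → Dim v2' →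
      val2 v2 (Q v1 v2').2 - (P v1 v2').2 ≤ val2 v2 (Q v1 v2).2 - (P v1 v2).2)
    -- Pareto optimality of every produced outcome
    (hPO : ∀ v1 v2, Dim v1 → Dim v2 →
      ¬ ∃ (q' : ℕ × ℕ) (p' : ℝ × ℝ),
        q'.1 + q'.2 ≤ 2 ∧ p'.1 ≤ b1 ∧ p'.2 ≤ b2 ∧
        val2 v1 (Q v1 v2).1 - (P v1 v2).1 ≤ val2 v1 q'.1 - p'.1 ∧
        val2 v2 (Q v1 v2).2 - (P v1 v2).2 ≤ val2 v2 q'.2 - p'.2 ∧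
        (P v1 v2).1 + (P v1 v2).2 ≤ p'.1 + p'.2 ∧
        (val2 v1 (Q v1 v2).1 - (P v1 v2).1 < val2 v1 q'.1 - p'.1 ∨
         val2 v2 (Q v1 v2).2 - (P v1 v2).2 < val2 v2 q'.2 - p'.2 ∨
         (P v1 v2).1 + (P v1 v2).2 < p'.1 + p'.2))
    -- the input: bidder 1 has positive marginal valuations and wins both items
    (v1 v2 : ℝ × ℝ) (hd1 : Dim v1) (hd2 : Dim v2)
    (hpos1 : 0 < v1.1) (hpos2 : 0 < v1.2)
    (hwin : (Q v1 v2).1 = 2) :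
    (P v1 v2).2 = 0 := by
  have d0 : Dim ((0 : ℝ), (0 : ℝ)) := by simp [Dim]
  have z0 : ∀ q, val2 ((0 : ℝ), (0 : ℝ)) q = 0 := by
    intro q
    unfold val2
    split <;> simp
  -- against the zero report, a bidder 1 with positive marginals wins both items
  have key : ∀ w : ℝ × ℝ, Dim w → 0 < w.1 → 0 < w.2 → (Q w (0, 0)).1 = 2 := by
    intro w hw h1 h2
    by_contra hne
    obtain ⟨hf, hp1, hp2⟩ := hfeas w (0, 0) hw d0
    have hlt : val2 w (Q w (0, 0)).1 < val2 w 2 := by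
      have h3 : (Q w (0, 0)).1 = 0 ∨ (Q w (0, 0)).1 = 1 := by omega
      rcases h3 with h3 | h3 <;> rw [h3] <;> simp only [val2] <;> linarith
    refine hPO w (0, 0) hw d0 ⟨(2, 0), P w (0, 0), by simp, hp1, hp2, ?_, ?_, le_refl _, Or.inl ?_⟩
    · simp only; linarith
    · rw [z0, z0]
    · simp only; linarith
  have q2 : (Q v1 v2).2 = 0 := by
    have := (hfeas v1 v2 hd1 hd2).1
    omega
  have k1 := key v1 hd1 hpos1 hpos2
  have q20 : (Q v1 (0, 0)).2 = 0 := by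
    have := (hfeas v1 (0, 0) hd1 d0).1
    omega
  have i1 := hIC2 v1 (0, 0) v2 hd1 d0 hd2
  have i2 := hIC2 v1 v2 (0, 0) hd1 hd2 d0
  have hle := (hBR v1 v2 hd1 hd2).2
  rw [q2, q20] at i1 i2
  rw [q2] at hle
  have e0 : val2 v2 0 = 0 := rfl
  by_contra hne
  have hneg : (P v1 v2).2 < 0 := lt_of_le_of_ne (by linarith) hne
  have har := hAR v1 (0, 0) hd1 d0
  set t := -(P v1 v2).2 with ht
  have tpos : 0 < t := by linarith
  have dw : Dim (t / 4, t / 4) := ⟨by simp only; linarith, le_refl _⟩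
  have kw := key (t / 4, t / 4) dw (by simp only; linarith) (by simp only; linarith)
  have i3 := hIC1 v1 (t / 4, t / 4) (0, 0) hd1 dw d0
  have br := (hBR (t / 4, t / 4) (0, 0) dw d0).1
  rw [kw] at br
  rw [kw, k1] at i3
  have e2 : val2 (t / 4, t / 4) 2 = t / 4 + t / 4 := rfl
  linarith
end

section
/- Consider any two-bidder mechanism for |R| identical items with public budgets that is incentive compatible, Pareto optimal, bidder rational, and auctioneer rational. Then on every input on which the reported diminishing marginal valuations satisfy v_1(|R|) > v_2(1) and Σ_{j=1}^{|R|} v_2(j) ≤ b_1, the mechanism assigns all |R| items to bidder 1 (q_1 = |R|). -/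
/-!
Two-bidder multi-unit auction for `R ≥ 1` identical items with public
budgets and diminishing marginal valuations.  STATEMENT 15: for any
incentive compatible, Pareto optimal, bidder rational and auctioneer
rational mechanism, whenever the reports satisfy `v1(R) > v2(1)` and
`Σ_{j=1}^{R} v2(j) ≤ b1`, all `R` items are assigned to bidder 1.

A reported valuation is a function `v : ℕ → ℝ` whose values on
`{1, …, R}` are nonincreasing and nonnegative.
-/

open Finset

/-- `v` is a diminishing (nonincreasing, nonnegative) marginal
valuation for `R` items. -/
def DimR (R : ℕ) (v : ℕ → ℝ) : Prop :=
  (∀ k : ℕ, 1 ≤ k → k < R → v (k + 1) ≤ v k) ∧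
  (∀ k : ℕ, 1 ≤ k → k ≤ R → 0 ≤ v k)

/-- Total value of receiving `q` items under marginal valuation `v`. -/
def valR (v : ℕ → ℝ) (q : ℕ) : ℝ := ∑ k ∈ Finset.Icc 1 q, v k

lemma valR_succ (v : ℕ → ℝ) (n : ℕ) : valR v (n + 1) = valR v n + v (n + 1) := by
  unfold valR
  rw [Finset.sum_Icc_succ_top (by omega)]

lemma valR_zero (v : ℕ → ℝ) : valR v 0 = 0 := by
  simp [valR]

lemma valR_mono (v : ℕ → ℝ) (a b : ℕ) (hab : a ≤ b)
    (h : ∀ j, a < j → j ≤ b → 0 ≤ v j) : valR v a ≤ valR v b := by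
  induction b, hab using Nat.le_induction with
  | base => exact le_rfl
  | succ n hn ih =>
    rw [valR_succ]
    have h1 := ih (fun j hj hj' => h j hj (by omega))
    have h2 := h (n + 1) (by omega) le_rfl
    linarith

lemma valR_strict (v : ℕ → ℝ) (a b : ℕ) (hab : a < b)
    (h : ∀ j, a < j → j ≤ b → 0 < v j) : valR v a < valR v b := by
  obtain ⟨n, rfl⟩ : ∃ n, b = n + 1 := ⟨b - 1, by omega⟩
  rw [valR_succ]
  have h1 := valR_mono v a n (by omega) (fun j hj hj' => (h j hj (by omega)).le)
  have h2 := h (n + 1) (by omega) le_rfl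
  linarith

lemma valR_const_zero (v : ℕ → ℝ) (a b : ℕ) (hab : a ≤ b)
    (h : ∀ j, a < j → j ≤ b → v j = 0) : valR v b = valR v a := by
  induction b, hab using Nat.le_induction with
  | base => rfl
  | succ n hn ih =>
    rw [valR_succ, ih (fun j hj hj' => h j hj (by omega)), h (n + 1) (by omega) le_rfl, add_zero]

/-- truncated valuation -/
def truncV (s : ℕ) (w : ℕ → ℝ) : ℕ → ℝ := fun j => if j ≤ s then w j else 0

lemma truncV_dim (R s : ℕ) (w : ℕ → ℝ) (hw : DimR R w) : DimR R (truncV s w) := by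
  refine ⟨fun k h1 h2 => ?_, fun k h1 h2 => ?_⟩
  · unfold truncV
    have := hw.1 k h1 h2
    have := hw.2 k h1 h2.le
    split_ifs <;> first | omega | linarith
  · unfold truncV
    have := hw.2 k h1 h2
    split_ifs <;> linarith

lemma truncV_val_le (s : ℕ) (w : ℕ → ℝ) (k : ℕ) (hk : k ≤ s) :
    valR (truncV s w) k = valR w k := by
  unfold valR truncV
  refine Finset.sum_congr rfl fun j hj => ?_
  rw [Finset.mem_Icc] at hj
  rw [if_pos (by omega)]

lemma truncV_val_ge (s : ℕ) (w : ℕ → ℝ) (k : ℕ) (hk : s ≤ k) :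
    valR (truncV s w) k = valR w s := by
  rw [valR_const_zero (truncV s w) s k hk (fun j hj _ => if_neg (by omega)), truncV_val_le _ _ _ le_rfl]

lemma valR_add_const (v : ℕ → ℝ) (d : ℝ) (k : ℕ) :
    valR (fun j => v j + d) k = valR v k + k * d := by
  unfold valR
  rw [Finset.sum_add_distrib]
  simp

lemma dim_anti (R : ℕ) (v : ℕ → ℝ) (hv : DimR R v) (a b : ℕ) (ha : 1 ≤ a) (hab : a ≤ b)
    (hb : b ≤ R) : v b ≤ v a := by
  induction b, hab using Nat.le_induction with
  | base => exact le_rfl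
  | succ n hn ih => exact (hv.1 n (by omega) (by omega)).trans (ih (by omega))

theorem stmt15 (R : ℕ) (hR : 1 ≤ R) (b1 b2 : ℝ) (hb1 : 0 < b1) (hb2 : 0 < b2)
    (Q : (ℕ → ℝ) → (ℕ → ℝ) → ℕ × ℕ) (P : (ℕ → ℝ) → (ℕ → ℝ) → ℝ × ℝ)
    -- the mechanism always outputs a feasible outcome
    (hfeas : ∀ v1 v2, DimR R v1 → DimR R v2 →
      (Q v1 v2).1 + (Q v1 v2).2 ≤ R ∧ (P v1 v2).1 ≤ b1 ∧ (P v1 v2).2 ≤ b2)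
    -- bidder rationality
    (hBR : ∀ v1 v2, DimR R v1 → DimR R v2 →
      0 ≤ valR v1 (Q v1 v2).1 - (P v1 v2).1 ∧
      0 ≤ valR v2 (Q v1 v2).2 - (P v1 v2).2)
    -- auctioneer rationality
    (hAR : ∀ v1 v2, DimR R v1 → DimR R v2 → 0 ≤ (P v1 v2).1 + (P v1 v2).2)
    -- incentive compatibility for bidder 1
    (hIC1 : ∀ v1 v1' v2, DimR R v1 → DimR R v1' → DimR R v2 →
      valR v1 (Q v1' v2).1 - (P v1' v2).1 ≤ valR v1 (Q v1 v2).1 - (P v1 v2).1)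
    -- incentive compatibility for bidder 2
    (hIC2 : ∀ v1 v2 v2', DimR R v1 → DimR R v2 → DimR R v2' →
      valR v2 (Q v1 v2').2 - (P v1 v2').2 ≤ valR v2 (Q v1 v2).2 - (P v1 v2).2)
    -- Pareto optimality of every produced outcome
    (hPO : ∀ v1 v2, DimR R v1 → DimR R v2 →
      ¬ ∃ (q' : ℕ × ℕ) (p' : ℝ × ℝ),
        q'.1 + q'.2 ≤ R ∧ p'.1 ≤ b1 ∧ p'.2 ≤ b2 ∧
        valR v1 (Q v1 v2).1 - (P v1 v2).1 ≤ valR v1 q'.1 - p'.1 ∧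
        valR v2 (Q v1 v2).2 - (P v1 v2).2 ≤ valR v2 q'.2 - p'.2 ∧
        (P v1 v2).1 + (P v1 v2).2 ≤ p'.1 + p'.2 ∧
        (valR v1 (Q v1 v2).1 - (P v1 v2).1 < valR v1 q'.1 - p'.1 ∨
         valR v2 (Q v1 v2).2 - (P v1 v2).2 < valR v2 q'.2 - p'.2 ∨
         (P v1 v2).1 + (P v1 v2).2 < p'.1 + p'.2))
    -- the input
    (v1 v2 : ℕ → ℝ) (hd1 : DimR R v1) (hd2 : DimR R v2)
    (hgt : v2 1 < v1 R)
    (hbudget : ∑ j ∈ Finset.Icc 1 R, v2 j ≤ b1) :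
    (Q v1 v2).1 = R := by
  -- Pareto optimality forces bidder 1 to get all items bidder 2 does not value
  have grow : ∀ v1 v2, DimR R v1 → DimR R v2 → ∀ t, t ≤ R →
      (∀ j, 1 ≤ j → j ≤ R - t → 0 < v1 j) →
      (∀ j, t < j → j ≤ (Q v1 v2).2 → v2 j = 0) → R - t ≤ (Q v1 v2).1 := by
    intro v1 v2 h1 h2 t ht hpos hz
    by_contra hlt
    push Not at hlt
    have hs := valR_strict v1 _ _ hlt (fun j hj hj' => hpos j (by omega) hj')
    have hf := hfeas v1 v2 h1 h2
    have he : valR v2 (min (Q v1 v2).2 t) = valR v2 (Q v1 v2).2 := by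
      rcases le_total (Q v1 v2).2 t with h | h
      · rw [min_eq_left h]
      · rw [min_eq_right h, valR_const_zero v2 t _ h hz]
    refine hPO v1 v2 h1 h2 ⟨(R - t, min (Q v1 v2).2 t), P v1 v2, ?_, hf.2.1, hf.2.2, ?_, ?_, le_rfl,
      Or.inl ?_⟩
    · have := min_le_right (Q v1 v2).2 t
      simp only
      omega
    · simp only; linarith
    · simp only; linarith
    · simp only; linarith
  -- core: if bidder 2 values nothing beyond what he gets, bidder 1 pays at most zero
  have core : ∀ v1 v2, DimR R v1 → DimR R v2 → ∀ q, (Q v1 v2).1 = q → q ≤ R →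
      (∀ j, R - q < j → j ≤ R → v2 j = 0) → (P v1 v2).1 ≤ 0 := by
    intro v1 v2 h1 h2 q hq hqR hz
    by_contra hp
    push Not at hp
    set p := (P v1 v2).1 with hpdef
    set ε : ℝ := p / (q + 1) with hε
    have hq1 : (0 : ℝ) < q + 1 := by positivity
    have hεp : 0 < ε := by positivity
    have hqe : (q + 1) * ε = p := by rw [hε]; field_simp
    have hconst : DimR R (fun _ => ε) := ⟨fun _ _ _ => le_rfl, fun _ _ _ => hεp.le⟩
    have hd := truncV_dim R q _ hconst
    have hf := hfeas _ v2 hd h2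
    have hg := grow _ v2 hd h2 (R - q) (by omega)
      (fun j _ hj => by
        unfold truncV
        rw [if_pos (by omega)]
        exact hεp)
      (fun j hj hj' => hz j hj (by omega))
    have hge : q ≤ (Q (truncV q fun _ => ε) v2).1 := by omega
    have hbr := (hBR _ v2 hd h2).1
    rw [truncV_val_ge _ _ _ hge] at hbr
    have hv : valR (fun _ : ℕ => ε) q = q * ε := by simp [valR]
    have hic := hIC1 v1 _ v2 h1 hd h2
    have hm := valR_mono v1 q _ hge (fun j hj hj' => h1.2 j (by omega) (by omega))
    rw [hq] at hic
    nlinarith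
  -- pay: exchange argument
  have pay : ∀ v1 v2, DimR R v1 → DimR R v2 → ∀ s, 1 ≤ s → s ≤ R → (Q v1 v2).2 = s →
      (Q v1 v2).1 = R - s → v2 s < v1 (R - s + 1) → b1 - v2 s < (P v1 v2).1 := by
    intro v1 v2 h1 h2 s hs hsR hq2 hq1 hlt
    by_contra hp
    push Not at hp
    have hf := hfeas v1 v2 h1 h2
    have h0 := h2.2 s hs hsR
    have e1 := valR_succ v1 (R - s)
    have e2 := valR_succ v2 (s - 1)
    rw [Nat.sub_add_cancel hs] at e2
    refine hPO v1 v2 h1 h2 ⟨(R - s + 1, s - 1), ((P v1 v2).1 + v2 s, (P v1 v2).2 - v2 s),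
      ?_, ?_, ?_, ?_, ?_, ?_, Or.inl ?_⟩ <;> simp only [hq1, hq2]
    · omega
    · linarith
    · linarith [hf.2.2]
    · linarith
    · linarith
    · linarith
    · linarith
  by_contra hne
  have hf := hfeas v1 v2 hd1 hd2
  obtain ⟨s, hs⟩ : ∃ s, (Q v1 v2).2 = s := ⟨_, rfl⟩
  have hv2n := hd2.2 1 le_rfl hR
  have hv1 : ∀ j, 1 ≤ j → j ≤ R → v2 1 < v1 j := fun j hj hj' =>
    hgt.trans_le (dim_anti R v1 hd1 j R hj hj' le_rfl)
  have hv1p : ∀ j, 1 ≤ j → j ≤ R → 0 < v1 j := fun j hj hj' => hv2n.trans_lt (hv1 j hj hj')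
  have hg := grow v1 v2 hd1 hd2 s (by omega) (fun j hj hj' => hv1p j hj (by omega))
    (fun j hj hj' => by omega)
  have hq1 : (Q v1 v2).1 = R - s := by omega
  have hs1 : 1 ≤ s := by omega
  have hsR : s ≤ R := by omega
  have hsle := dim_anti R v2 hd2 1 s le_rfl hs1 hsR
  have hnn : ∀ j ∈ Finset.Icc 1 R, 0 ≤ v2 j := fun j hj => by
    rw [Finset.mem_Icc] at hj
    exact hd2.2 j hj.1 hj.2
  rcases lt_or_ge (v2 s) b1 with hA | hB
  · obtain ⟨d, hd0, hda, hdb⟩ : ∃ d : ℝ, 0 < d ∧ d < b1 - v2 s ∧ d < v1 R - v2 1 := by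
      obtain ⟨d, h0, h1⟩ := exists_between
        (lt_min (sub_pos.2 hA) (sub_pos.2 hgt) : (0 : ℝ) < min (b1 - v2 s) (v1 R - v2 1))
      exact ⟨d, h0, h1.trans_le (min_le_left _ _), h1.trans_le (min_le_right _ _)⟩
    have hdd : DimR R (fun j => v2 j + d) :=
      ⟨fun k h1 h2 => by have := hd2.1 k h1 h2; simp only; linarith,
       fun k h1 h2 => by have := hd2.2 k h1 h2; simp only; linarith⟩
    have hdt := truncV_dim R s _ hdd
    set w := truncV s (fun j => v2 j + d) with hw
    have hwf := hfeas v1 w hd1 hdt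
    have hwz : ∀ j, s < j → w j = 0 := fun j hj => if_neg (by omega)
    have hws : w s = v2 s + d := if_pos le_rfl
    have hwg := grow v1 w hd1 hdt s hsR (fun j hj hj' => hv1p j hj (by omega))
      (fun j hj _ => hwz j hj)
    have hge : s ≤ (Q v1 w).2 := by
      by_contra hlt
      push Not at hlt
      have i1 := hIC2 v1 v2 w hd1 hd2 hdt
      have i2 := hIC2 v1 w v2 hd1 hdt hd2
      rw [hs] at i1 i2
      rw [hw, truncV_val_le _ _ _ le_rfl, ← hw, valR_add_const] at i2
      have e : valR w (Q v1 w).2 = valR v2 (Q v1 w).2 + ((Q v1 w).2 : ℝ) * d := by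
        conv_lhs => rw [hw]
        rw [truncV_val_le _ _ _ hlt.le, valR_add_const]
      rw [e] at i2
      have hc : ((Q v1 w).2 : ℝ) < s := by exact_mod_cast hlt
      nlinarith
    have hp := pay v1 w hd1 hdt s hs1 hsR (by omega) (by omega) (by
      have := dim_anti R v1 hd1 (R - s + 1) R (by omega) (by omega) le_rfl
      rw [hws]; linarith)
    have hc := core v1 w hd1 hdt (R - s) (by omega) (by omega) (fun j hj _ => hwz j (by omega))
    rw [hws] at hp
    linarith
  · have hp := pay v1 v2 hd1 hd2 s hs1 hsR hs hq1
      (hsle.trans_lt (hv1 _ (by omega) (by omega)))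
    have hsmem : s ∈ Finset.Icc 1 R := Finset.mem_Icc.2 ⟨hs1, hsR⟩
    have hle := Finset.single_le_sum hnn hsmem
    have hz : ∀ j ∈ Finset.Icc 1 R, j ≠ s → v2 j = 0 := by
      intro j hj hjs
      have h2 := Finset.add_le_sum hnn hj hsmem hjs
      have := hnn j hj
      linarith
    have hc := core v1 v2 hd1 hd2 (R - s) hq1 (by omega)
      (fun j hj hj' => hz j (Finset.mem_Icc.2 ⟨by omega, hj'⟩) (by omega))
    linarith
end
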